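/- Under the standing assumptions, let s ≤ s′ be natural numbers, ℓ̲ ∈ ℕ, and Ψs a real with Ψ^s(ℓ) ≤ Ψs for all ℓ ≥ ℓ̲. Then: (i) L_ℓ ≤ 4sκ + Ψs for all ℓ with ℓ̲ ≤ ℓ < ℓ̲ + 2Ψs/κ; and (ii) L_ℓ ≤ 4s′κ + Ψs/2^{s′−s} for all ℓ ≥ ℓ̲ + 2Ψs/κ (self-stabilization of the local skew). -/

import Mathlib

/-!
Pulse times are taken relative to the drift `Λ * ℓ`. Let `Ψ^s ≤ P` from some layer on, suppose that
`v` later exceeds `w` by more than `4(s+1)κ * dist v w + P/2`, and go back layer by layer, following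
two nodes. The node `y` starts at `v`; by the fast condition it can be moved so as to gain `κ` per
layer over a cone of slope `A = (4(s+1)-2)κ`. The node `z` starts at `w`; by the slow condition it
can be moved so as to rise by at most `κ/2` per layer relative to an inverted cone of slope
`B = 4(s+1)κ`. Both cones have their apex at a common node `p`, which moves towards `z` whenever `y`
has reached it and has to descend. A node at or next to `p` remains higher than the apex of the
lower cone, which keeps `z` away from it; by the jump condition, an overshoot can at most make the
two swap places. After `⌊P/κ⌋` layers the height of `y` over `z` exceeds `4sκ * dist y z + P`, a
contradiction. Thus each increment of `s` halves the bound at the cost of `P/κ` layers, and these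
costs form a geometric series with sum `2P/κ`.
-/

section GraphDistance

variable {V : Type*} {G : SimpleGraph V} {p x y : V}

theorem dist_le_dist_add_one_of_adj (p : V) (hxy : G.Adj x y) : G.dist y p ≤ G.dist x p + 1 := by
  rw [G.dist_comm (u := y), G.dist_comm (u := x)]
  have := hxy.diff_dist_adj (u := p)
  omega

theorem exists_adj_dist_add_one_eq (hyp : G.Reachable y p) (hne : y ≠ p) :
    ∃ x, G.Adj y x ∧ G.dist x p + 1 = G.dist y p := by
  obtain ⟨walk, hwalk⟩ := hyp.exists_walk_length_eq_dist
  cases walk with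
  | nil => exact absurd rfl hne
  | @cons _ x _ hyx tail =>
    refine ⟨x, hyx, ?_⟩
    have htail : G.dist x p ≤ tail.length := G.dist_le tail
    have hdist : G.dist y p ≤ G.dist x p + 1 := dist_le_dist_add_one_of_adj p hyx.symm
    rw [SimpleGraph.Walk.length_cons] at hwalk
    omega

end GraphDistance

section Cones

variable {V : Type*} {G : SimpleGraph V} {A B a a' b b' : ℝ} {T : V → ℝ} {p x : V}

/-- `T` reaches the cone of slope `A` that opens upwards from height `a` at `p`; for finite
`V`, the least `A`-Lipschitz majorant of `T` is at least `a` at `p`. -/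
def HasPeak (G : SimpleGraph V) (A : ℝ) (T : V → ℝ) (p : V) (a : ℝ) : Prop :=
  ∃ y, a + A * G.dist y p ≤ T y

/-- `T` drops to the cone of slope `B` that opens downwards from height `b` at `p`; for finite
`V`, the greatest `B`-Lipschitz minorant of `T` is at most `b` at `p`. -/
def HasValley (G : SimpleGraph V) (B : ℝ) (T : V → ℝ) (p : V) (b : ℝ) : Prop :=
  ∃ z, T z + B * G.dist z p ≤ b

theorem HasPeak.of_le (h : a ≤ T p) : HasPeak G A T p a :=
  ⟨p, by simpa using h⟩

theorem HasPeak.mono (h : HasPeak G A T p a) (ha : a' ≤ a) : HasPeak G A T p a' :=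
  h.imp fun _ hy => by linarith

theorem HasPeak.of_adj (hA : 0 ≤ A) (hpx : G.Adj p x) (h : HasPeak G A T p a) :
    HasPeak G A T x (a - A) := by
  obtain ⟨y, hy⟩ := h
  have hdist : (G.dist y x : ℝ) ≤ G.dist y p + 1 := by
    rw [G.dist_comm (u := y), G.dist_comm (u := y)]
    exact_mod_cast dist_le_dist_add_one_of_adj y hpx
  exact ⟨y, by linarith [mul_le_mul_of_nonneg_left hdist hA]⟩

theorem HasValley.of_le (h : T p ≤ b) : HasValley G B T p b :=
  ⟨p, by simpa using h⟩

theorem HasValley.of_adj_le (hpx : G.Adj p x) (h : T x ≤ b - B) : HasValley G B T p b :=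
  ⟨x, by rw [SimpleGraph.dist_eq_one_iff_adj.mpr hpx.symm]; push_cast; linarith⟩

theorem HasValley.mono (h : HasValley G B T p b) (hb : b ≤ b') : HasValley G B T p b' :=
  h.imp fun _ hz => by linarith

theorem HasValley.le_or_exists_adj (hconn : G.Connected) (h : HasValley G B T p b) :
    T p ≤ b ∨ ∃ x, G.Adj p x ∧ HasValley G B T x (b - B) := by
  obtain ⟨z, hz⟩ := h
  obtain rfl | hne := eq_or_ne p z
  · exact .inl (by simpa using hz)
  · obtain ⟨x, hpx, hdist⟩ := exists_adj_dist_add_one_eq (hconn p z) hne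
    rw [G.dist_comm (u := x), G.dist_comm (u := p)] at hdist
    rw [← hdist] at hz
    push_cast at hz
    exact .inr ⟨x, hpx, z, by linarith⟩

end Cones

/-- What the fast, slow and jump conditions say about the passage from the pulse times `T` of one
layer to the pulse times `T'` of the next one, where both are relative to the nominal drift and the
corrections have been eliminated. -/
structure LayerStep {V : Type*} (G : SimpleGraph V) (A B κ : ℝ) (T T' : V → ℝ) : Prop where
  fast : ∀ v, (∃ x, G.Adj v x ∧ T' v ≤ T x - A - κ) ∨
    (∀ x, G.Adj v x → T' v ≤ T x + A - κ) ∨ T' v ≤ T v - κ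
  slow : ∀ v, (∀ x, G.Adj v x → T x - B - κ / 2 ≤ T' v) ∨
    (∃ x, G.Adj v x ∧ T x + B - κ / 2 ≤ T' v) ∨ T v - κ / 2 ≤ T' v
  jump_up : ∀ v, T' v ≤ T v ∨ ∀ x, G.Adj v x → T' v ≤ T x - κ
  jump_down : ∀ v, (∀ x, G.Adj v x → T x + κ / 2 ≤ T' v) ∨ T v - 3 * κ / 2 ≤ T' v

namespace LayerStep

variable {V : Type*} {G : SimpleGraph V} {A B κ a b : ℝ} {T T' : V → ℝ} {p x : V}

theorem hasPeak_or_forall_adj (hT : LayerStep G A B κ T T') (hconn : G.Connected) (hA : 0 ≤ A)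
    (h : HasPeak G A T' p a) :
    HasPeak G A T p (a + κ) ∨ a ≤ T' p ∧ ∀ x, G.Adj p x → T' p ≤ T x + A - κ := by
  obtain ⟨y, hy⟩ := h
  rcases hT.fast y with ⟨x, hyx, hx⟩ | hall | hstay
  · have hdist : (G.dist x p : ℝ) ≤ G.dist y p + 1 := mod_cast dist_le_dist_add_one_of_adj p hyx
    exact .inl ⟨x, by linarith [mul_le_mul_of_nonneg_left hdist hA]⟩
  · obtain rfl | hne := eq_or_ne y p
    · rw [G.dist_self, Nat.cast_zero, mul_zero, add_zero] at hy
      exact .inr ⟨hy, hall⟩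
    · obtain ⟨x, hyx, hdist⟩ := exists_adj_dist_add_one_eq (hconn y p) hne
      rw [← hdist] at hy
      push_cast at hy
      exact .inl ⟨x, by linarith [hall x hyx]⟩
  · exact .inl ⟨y, by linarith⟩

theorem hasValley_or_forall_adj (hT : LayerStep G A B κ T T') (hconn : G.Connected) (hB : 0 ≤ B)
    (h : HasValley G B T' p b) :
    HasValley G B T p (b + κ / 2) ∨
      T' p ≤ b ∧ ∀ x, G.Adj p x → T x ≤ b + κ / 2 + B := by
  obtain ⟨z, hz⟩ := h
  rcases hT.slow z with hall | ⟨x, hzx, hx⟩ | hstay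
  · obtain rfl | hne := eq_or_ne z p
    · rw [G.dist_self, Nat.cast_zero, mul_zero, add_zero] at hz
      exact .inr ⟨hz, fun x hzx => by linarith [hall x hzx]⟩
    · obtain ⟨x, hzx, hdist⟩ := exists_adj_dist_add_one_eq (hconn z p) hne
      rw [← hdist] at hz
      push_cast at hz
      exact .inl ⟨x, by linarith [hall x hzx]⟩
  · have hdist : (G.dist x p : ℝ) ≤ G.dist z p + 1 := mod_cast dist_le_dist_add_one_of_adj p hzx
    exact .inl ⟨x, by linarith [mul_le_mul_of_nonneg_left hdist hB]⟩
  · exact .inl ⟨z, by linarith⟩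

theorem add_le_of_adj_of_lt (hT : LayerStep G A B κ T T') (hAB : A ≤ B) (hpx : G.Adj p x)
    (hlt : T' x + B + κ / 2 < T' p) (hle : T' p ≤ T x + A - κ) : T p + κ / 2 ≤ T' x := by
  rcases hT.jump_down x with hjump | hstay
  · exact hjump p hpx.symm
  · linarith

theorem exists_adj_hasValley_or_le (hT : LayerStep G A B κ T T') (hconn : G.Connected)
    (hκ : 0 ≤ κ) (hA : 0 ≤ A) (hAB : A ≤ B) (hb : b + κ / 2 < T' p) (h : HasValley G B T' p b) :
    ∃ x, G.Adj p x ∧ (T' p ≤ T x + A - κ →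
      HasValley G B T x (b - B + κ / 2) ∨ T p ≤ b - B - κ / 2) := by
  obtain hp | ⟨x, hpx, hx⟩ := h.le_or_exists_adj hconn
  · linarith
  refine ⟨x, hpx, fun hle => ?_⟩
  refine (hT.hasValley_or_forall_adj hconn (hA.trans hAB) hx).imp_right fun hx => ?_
  have hlt : T' x + B + κ / 2 < T' p := by linarith [hx.1]
  linarith [hx.1, hT.add_le_of_adj_of_lt hAB hpx hlt hle]

end LayerStep

/-- The configuration traced back through the layers: two cones with a common apex node `p`, the
upper one of slope `A` starting at `c + δ`, the lower one of slope `B` starting at `c - ε`. The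
node that stays above `c` is either `p` itself or a neighbour of `p`; in the latter case the lower
cone has to start at `c - ε - B`, as if the path to the valley led from the neighbour through
`p`. -/
def Straddles {V : Type*} (G : SimpleGraph V) (A B : ℝ) (T : V → ℝ) (δ ε : ℝ) : Prop :=
  ∃ p c, HasPeak G A T p (c + δ) ∧
    (c ≤ T p ∧ HasValley G B T p (c - ε) ∨
      ∃ q, G.Adj p q ∧ c ≤ T q ∧ HasValley G B T p (c - ε - B))

namespace Straddles

variable {V : Type*} {G : SimpleGraph V} {A B κ c δ ε : ℝ} {T T' : V → ℝ} {p q : V}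

theorem of_apex (hpeak : HasPeak G A T p (c + δ)) (hc : c ≤ T p)
    (hvalley : HasValley G B T p (c - ε)) : Straddles G A B T δ ε :=
  ⟨p, c, hpeak, .inl ⟨hc, hvalley⟩⟩

theorem of_adj (hpeak : HasPeak G A T p (c + δ)) (hpq : G.Adj p q) (hc : c ≤ T q)
    (hvalley : HasValley G B T p (c - ε - B)) : Straddles G A B T δ ε :=
  ⟨p, c, hpeak, .inr ⟨q, hpq, hc, hvalley⟩⟩

theorem of_pair (A : ℝ) (v w : V) :
    Straddles G A B T 0 (T v - T w - B * G.dist v w) :=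
  of_apex (c := T v) (.of_le (add_zero _).le) le_rfl
    ⟨w, by rw [G.dist_comm (u := w)]; linarith⟩

theorem of_layerStep_of_le_apex (hT : LayerStep G A B κ T T') (hconn : G.Connected)
    (hκ : 0 ≤ κ) (hA : 0 ≤ A) (hAB : A ≤ B) (hε : κ / 2 < ε)
    (hpeak : HasPeak G A T' p (c + δ)) (hc : c ≤ T' p) (hvalley : HasValley G B T' p (c - ε)) :
    Straddles G A B T (δ + κ) (ε - κ / 2) := by
  obtain ⟨x, hpx, hx⟩ := hT.exists_adj_hasValley_or_le hconn hκ hA hAB (by linarith) hvalley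
  rcases hT.hasPeak_or_forall_adj hconn hA hpeak with hpeak | ⟨hpeak, hdescend⟩ <;>
    rcases hT.jump_up p with hstay | hjump
  · have hvalley : HasValley G B T p (c - ε + κ / 2) :=
      (hT.hasValley_or_forall_adj hconn (hA.trans hAB) hvalley).resolve_right
        fun hp => by linarith [hp.1]
    exact of_apex (hpeak.mono (by linarith)) (hc.trans hstay) (hvalley.mono (by linarith))
  · have hpx_le := hjump x hpx
    rcases hx (by linarith) with hvalley | hp
    · exact of_apex (c := c - A) ((hpeak.of_adj hA hpx).mono (by linarith)) (by linarith)
        (hvalley.mono (by linarith))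
    -- Here `x` is the valley and jumps as well, so that `p` and `x` swap roles.
    · exact of_adj (c := c) (hpeak.mono (by linarith)) hpx (by linarith) (.of_le (by linarith))
  · have hpx_le := hdescend x hpx
    have hvalley : HasValley G B T x (c - ε - B + κ / 2) :=
      (hx hpx_le).resolve_right fun hp => by linarith
    exact of_apex (c := c - A) (.of_le (by linarith)) (by linarith) (hvalley.mono (by linarith))
  · have hpx_le := hjump x hpx
    have hvalley : HasValley G B T x (c - ε + κ / 2) := by
      rcases hx (by linarith) with hvalley | hp
      · exact hvalley.mono (by linarith)
      · exact .of_adj_le hpx.symm (by linarith)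
    exact of_apex (c := c) (.of_le (by linarith)) (by linarith) (hvalley.mono (by linarith))

theorem of_layerStep_of_le_adj (hT : LayerStep G A B κ T T') (hconn : G.Connected)
    (hκ : 0 ≤ κ) (hA : 0 ≤ A) (hAB : A ≤ B) (hε : κ / 2 < ε)
    (hpeak : HasPeak G A T p (c + δ + κ)) (hpq : G.Adj p q) (hc : c ≤ T' q)
    (hvalley : HasValley G B T' p (c - ε - B)) :
    Straddles G A B T (δ + κ) (ε - κ / 2) := by
  have hpeak : HasPeak G A T p (c + (δ + κ)) := hpeak.mono (by linarith)
  rcases hT.jump_up q with hstay | hjump <;>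
    rcases hT.hasValley_or_forall_adj hconn (hA.trans hAB) hvalley with hvalley | ⟨hp, hadj⟩
  · exact of_adj hpeak hpq (hc.trans hstay) (hvalley.mono (by linarith))
  · linarith [hadj q hpq]
  · exact of_apex hpeak (by linarith [hjump p hpq.symm]) (hvalley.mono (by linarith))
  · have hq_le := hjump p hpq.symm
    have hq : T q + κ / 2 ≤ T' p :=
      hT.add_le_of_adj_of_lt hAB hpq.symm (by linarith) (by linarith)
    exact of_apex hpeak (by linarith) (.of_adj_le hpq (by linarith))

theorem of_layerStep (hT : LayerStep G A B κ T T') (hconn : G.Connected)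
    (hκ : 0 ≤ κ) (hA : 0 ≤ A) (hAB : A ≤ B) (hδ : 0 ≤ δ) (hε : κ / 2 < ε)
    (h : Straddles G A B T' δ ε) : Straddles G A B T (δ + κ) (ε - κ / 2) := by
  obtain ⟨p, c, hpeak, ⟨hc, hvalley⟩ | ⟨q, hpq, hc, hvalley⟩⟩ := h
  · exact of_layerStep_of_le_apex hT hconn hκ hA hAB hε hpeak hc hvalley
  rcases hT.hasPeak_or_forall_adj hconn hA hpeak with hpeak' | ⟨hcp, _⟩
  · exact of_layerStep_of_le_adj hT hconn hκ hA hAB hε hpeak' hpq hc hvalley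
  · exact of_layerStep_of_le_apex hT hconn hκ hA hAB hε hpeak (by linarith)
      (hvalley.mono (by linarith))

theorem of_forall_layerStep {τ : ℕ → V → ℝ} (hτ : ∀ ℓ, LayerStep G A B κ (τ ℓ) (τ (ℓ + 1)))
    (hconn : G.Connected) (hκ : 0 ≤ κ) (hA : 0 ≤ A) (hAB : A ≤ B) (hδ : 0 ≤ δ) (ℓ n : ℕ)
    (hε : n * κ / 2 < ε) (h : Straddles G A B (τ (ℓ + n)) δ ε) :
    Straddles G A B (τ ℓ) (δ + n * κ) (ε - n * κ / 2) := by
  induction n generalizing δ ε with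
  | zero => simpa using h
  | succ n ih =>
    have hnκ : 0 ≤ n * κ := by positivity
    push_cast at hε ⊢
    have hprev : Straddles G A B (τ (ℓ + n)) (δ + κ) (ε - κ / 2) :=
      of_layerStep (hτ _) hconn hκ hA hAB hδ (by linarith) h
    convert ih (by linarith) (by linarith) hprev using 1 <;> ring

end Straddles

/-- The height difference of any two nodes exceeds `σ` times their distance by at most `P`. With
`σ = 4sκ` and `T` the pulse times of layer `ℓ`, this is the bound `Ψ^s(ℓ) ≤ P`. -/
def SkewBound {V : Type*} (G : SimpleGraph V) (σ : ℝ) (T : V → ℝ) (P : ℝ) : Prop :=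
  ∀ v w, T v - T w - σ * G.dist v w ≤ P

section SkewBound

variable {V : Type*} {G : SimpleGraph V} {A B K κ P δ ε σ : ℝ} {T : V → ℝ} {v w : V}

theorem SkewBound.nonneg [Nonempty V] (h : SkewBound G σ T P) : 0 ≤ P := by
  simpa using h (Classical.arbitrary V) (Classical.arbitrary V)

theorem SkewBound.abs_sub_le_of_adj (h : SkewBound G σ T P) (hvw : G.Adj v w) :
    |T v - T w| ≤ σ + P := by
  have hv := h v w
  have hw := h w v
  rw [SimpleGraph.dist_eq_one_iff_adj.mpr hvw] at hv
  rw [SimpleGraph.dist_eq_one_iff_adj.mpr hvw.symm] at hw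
  push_cast at hv hw
  exact abs_sub_le_iff.mpr ⟨by linarith, by linarith⟩

theorem SkewBound.sub_le_of_hasPeak_of_hasValley {p : V} {a b : ℝ} (hP : SkewBound G K T P)
    (hconn : G.Connected) (hK : 0 ≤ K) (hKA : K ≤ A) (hKB : K ≤ B) (hpeak : HasPeak G A T p a)
    (hvalley : HasValley G B T p b) : a - b ≤ P := by
  obtain ⟨y, hy⟩ := hpeak
  obtain ⟨z, hz⟩ := hvalley
  have hdist : (G.dist y z : ℝ) ≤ G.dist y p + G.dist z p := by
    rw [G.dist_comm (u := z)]
    exact_mod_cast hconn.dist_triangle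
  have hcone : K * G.dist y z ≤ A * G.dist y p + B * G.dist z p := calc
    K * G.dist y z ≤ K * (G.dist y p + G.dist z p) := mul_le_mul_of_nonneg_left hdist hK
    _ = K * G.dist y p + K * G.dist z p := mul_add ..
    _ ≤ A * G.dist y p + B * G.dist z p := by gcongr
  linarith [hP y z]

theorem SkewBound.add_le_of_straddles (hP : SkewBound G K T P) (hconn : G.Connected) (hK : 0 ≤ K)
    (hKA : K ≤ A) (hAB : A ≤ B) (hε : 0 < ε) (h : Straddles G A B T δ ε) :
    δ + ε + (B - A) ≤ P := by
  have hA : 0 ≤ A := hK.trans hKA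
  obtain ⟨p, c, hpeak, ⟨hc, hvalley⟩ | ⟨q, -, -, hvalley⟩⟩ := h
  · obtain hp | ⟨x, hpx, hvalley⟩ := hvalley.le_or_exists_adj hconn
    · linarith
    · linarith [hP.sub_le_of_hasPeak_of_hasValley hconn hK hKA (hKA.trans hAB)
        (hpeak.of_adj hA hpx) hvalley]
  · linarith [hP.sub_le_of_hasPeak_of_hasValley hconn hK hKA (hKA.trans hAB) hpeak hvalley]

theorem SkewBound.of_forall_layerStep {τ : ℕ → V → ℝ}
    (hτ : ∀ ℓ, LayerStep G A B κ (τ ℓ) (τ (ℓ + 1))) (hconn : G.Connected) (hκ : 0 ≤ κ)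
    (hK : 0 ≤ K) (hKA : K ≤ A) (hAB : A ≤ B) {ℓ : ℕ} (hP : SkewBound G K (τ ℓ) P) (n : ℕ) :
    SkewBound G B (τ (ℓ + n)) (max (n * κ / 2) (P - n * κ / 2 - (B - A))) := by
  intro v w
  by_contra! hlt
  obtain ⟨hgap, hexcess⟩ := max_lt_iff.mp hlt
  have hstraddles := Straddles.of_forall_layerStep hτ hconn hκ (hK.trans hKA) hAB le_rfl ℓ n hgap
    (Straddles.of_pair A v w)
  linarith [hP.add_le_of_straddles hconn hK hKA hAB (by linarith) hstraddles]

end SkewBound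

/-- The drift, slow, fast and jump conditions on the pulse times `t` and the corrections `C`; the
passage from layer `ℓ` to layer `ℓ + 1` is governed by `C v (ℓ + 1)`. -/
structure PulseConditions {V : Type*} (G : SimpleGraph V) (ϑ u d Λ κ : ℝ) (t C : V → ℕ → ℝ) :
    Prop where
  drift : ∀ (v : V) (ℓ : ℕ),
    d - u + (Λ - d - C v (ℓ + 1)) / ϑ ≤ t v (ℓ + 1) - t v ℓ ∧
    t v (ℓ + 1) - t v ℓ ≤ Λ - C v (ℓ + 1)
  slow : ∀ (s : ℕ) (v : V) (ℓ : ℕ),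
    (∀ w : V, G.Adj v w → C v (ℓ + 1) / ϑ ≤ t v ℓ - t w ℓ + 4 * (s : ℝ) * κ) ∨
    (∃ w : V, G.Adj v w ∧ C v (ℓ + 1) / ϑ ≤ t v ℓ - t w ℓ - 4 * (s : ℝ) * κ) ∨
    C v (ℓ + 1) ≤ 0
  fast : ∀ (s : ℕ), 1 ≤ s → ∀ (v : V) (ℓ : ℕ),
    (∃ w : V, G.Adj v w ∧ t v ℓ - t w ℓ + (4 * (s : ℝ) - 2) * κ + κ ≤ C v (ℓ + 1)) ∨
    (∀ w : V, G.Adj v w → t v ℓ - t w ℓ - (4 * (s : ℝ) - 2) * κ + κ ≤ C v (ℓ + 1)) ∨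
    κ ≤ C v (ℓ + 1)
  jump : ∀ (v : V) (ℓ : ℕ),
    (κ < C v (ℓ + 1) / ϑ ∧ ∀ w : V, G.Adj v w → C v (ℓ + 1) / ϑ ≤ t v ℓ - t w ℓ - κ) ∨
    (C v (ℓ + 1) < 0 ∧ ∀ w : V, G.Adj v w → t v ℓ - t w ℓ + κ ≤ C v (ℓ + 1)) ∨
    (0 ≤ C v (ℓ + 1) / ϑ ∧ C v (ℓ + 1) / ϑ ≤ κ)

theorem kappa_pos {ϑ u d Λ κ : ℝ} (hϑ : 1 < ϑ) (hu : 0 ≤ u) (hΛ : d < Λ)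
    (hκ : κ = 2 * (u + (1 - 1 / ϑ) * (Λ - d))) : 0 < κ := by
  have hinv : 1 / ϑ < 1 := (div_lt_one (by linarith)).mpr hϑ
  have hprod : 0 < (1 - 1 / ϑ) * (Λ - d) := mul_pos (by linarith) (by linarith)
  linarith

namespace PulseConditions

variable {V : Type*} {G : SimpleGraph V} {ϑ u d Λ κ : ℝ} {t C : V → ℕ → ℝ}

theorem drift_sub_le (h : PulseConditions G ϑ u d Λ κ t C) (hϑ : 0 < ϑ)
    (hκ : κ = 2 * (u + (1 - 1 / ϑ) * (Λ - d))) (v : V) (ℓ : ℕ) :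
    Λ - κ / 2 - C v (ℓ + 1) / ϑ ≤ t v (ℓ + 1) - t v ℓ := calc
  Λ - κ / 2 - C v (ℓ + 1) / ϑ = d - u + (Λ - d - C v (ℓ + 1)) / ϑ := by
    rw [hκ]; field_simp; ring
  _ ≤ t v (ℓ + 1) - t v ℓ := (h.drift v ℓ).1

theorem layerStep (h : PulseConditions G ϑ u d Λ κ t C) (hϑ : 0 < ϑ) (hκ_pos : 0 < κ)
    (hκ : κ = 2 * (u + (1 - 1 / ϑ) * (Λ - d))) {s : ℕ} (hs : 1 ≤ s) (ℓ : ℕ) :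
    LayerStep G ((4 * s - 2) * κ) (4 * s * κ) κ (fun v => t v ℓ - Λ * ℓ)
      (fun v => t v (ℓ + 1) - Λ * (ℓ + 1 : ℕ)) := by
  have hlower := h.drift_sub_le hϑ hκ
  have hupper := fun v => (h.drift v ℓ).2
  push_cast
  refine ⟨fun v => ?_, fun v => ?_, fun v => ?_, fun v => ?_⟩
  · exact (h.fast s hs v ℓ).imp
      (fun ⟨x, hvx, hx⟩ => ⟨x, hvx, by linarith [hupper v]⟩)
      (Or.imp (fun hall x hvx => by linarith [hupper v, hall x hvx])
        fun hC => by linarith [hupper v])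
  · refine (h.slow s v ℓ).imp
      (fun hall x hvx => by linarith [hlower v ℓ, hall x hvx])
      (Or.imp (fun ⟨x, hvx, hx⟩ => ⟨x, hvx, by linarith [hlower v ℓ]⟩) fun hC => ?_)
    linarith [hlower v ℓ, div_nonpos_of_nonpos_of_nonneg hC hϑ.le]
  · have hstay (hC : 0 ≤ C v (ℓ + 1) / ϑ) : t v (ℓ + 1) - Λ * (ℓ + 1) ≤ t v ℓ - Λ * ℓ := by
      linarith [hupper v, (le_div_iff₀ hϑ).mp hC]
    rcases h.jump v ℓ with ⟨hC, -⟩ | ⟨-, hall⟩ | ⟨hC, -⟩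
    · exact .inl (hstay (hκ_pos.trans hC).le)
    · exact .inr fun x hvx => by linarith [hupper v, hall x hvx]
    · exact .inl (hstay hC)
  · rcases h.jump v ℓ with ⟨-, hall⟩ | ⟨hC, -⟩ | ⟨-, hC⟩
    · exact .inl fun x hvx => by linarith [hlower v ℓ, hall x hvx]
    · exact .inr (by linarith [hlower v ℓ, div_neg_of_neg_of_pos hC hϑ])
    · exact .inr (by linarith [hlower v ℓ])

theorem skewBound_half (h : PulseConditions G ϑ u d Λ κ t C) (hϑ : 0 < ϑ) (hκ_pos : 0 < κ)
    (hκ : κ = 2 * (u + (1 - 1 / ϑ) * (Λ - d))) (hconn : G.Connected) {s lo : ℕ} {P : ℝ}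
    (hP : ∀ ℓ, lo ≤ ℓ → SkewBound G (4 * s * κ) (t · ℓ) P) {ℓ : ℕ} (hℓ : lo + ⌊P / κ⌋₊ ≤ ℓ) :
    SkewBound G (4 * (s + 1 : ℕ) * κ) (t · ℓ) (P / 2) := by
  have := hconn.nonempty
  have hP_nonneg : 0 ≤ P := (hP lo le_rfl).nonneg
  obtain ⟨k, rfl⟩ := Nat.exists_eq_add_of_le' (le_of_add_le_right hℓ)
  have hfloor_le : ⌊P / κ⌋₊ * κ ≤ P :=
    (le_div_iff₀ hκ_pos).mp (Nat.floor_le (div_nonneg hP_nonneg hκ_pos.le))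
  have hlt_floor : P < (⌊P / κ⌋₊ + 1) * κ := (div_lt_iff₀ hκ_pos).mp (Nat.lt_floor_add_one _)
  have hstart : SkewBound G (4 * s * κ) (fun v => t v k - Λ * k) P := fun v w => by
    simpa only [sub_sub_sub_cancel_right] using hP k (by omega) v w
  have hbound := SkewBound.of_forall_layerStep (h.layerStep hϑ hκ_pos hκ (Nat.le_add_left 1 s))
    hconn hκ_pos.le (by positivity) (by push_cast; linarith) (by linarith) hstart ⌊P / κ⌋₊
  intro v w
  have hvw := hbound v w
  rw [sub_sub_sub_cancel_right] at hvw
  exact hvw.trans (max_le (by linarith) (by linarith))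

theorem skewBound_div_two_pow (h : PulseConditions G ϑ u d Λ κ t C) (hϑ : 0 < ϑ) (hκ_pos : 0 < κ)
    (hκ : κ = 2 * (u + (1 - 1 / ϑ) * (Λ - d))) (hconn : G.Connected) {s lo : ℕ} {P : ℝ}
    (hP : ∀ ℓ, lo ≤ ℓ → SkewBound G (4 * s * κ) (t · ℓ) P) (m : ℕ) {ℓ : ℕ}
    (hℓ : lo + 2 * P / κ ≤ ℓ) : SkewBound G (4 * (s + m : ℕ) * κ) (t · ℓ) (P / 2 ^ m) := by
  have := hconn.nonempty
  have hPκ : 0 ≤ P / κ := div_nonneg (hP lo le_rfl).nonneg hκ_pos.le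
  have htwo : 2 * P / κ = P / κ + P / κ := by ring
  induction m generalizing s lo P with
  | zero =>
    have hlo : (lo : ℝ) ≤ ℓ := by linarith
    simpa using hP ℓ (mod_cast hlo)
  | succ m ih =>
    have hstart : ((lo + ⌊P / κ⌋₊ : ℕ) : ℝ) + 2 * (P / 2) / κ ≤ ℓ := by
      rw [mul_div_cancel₀ P two_ne_zero]
      push_cast
      linarith [Nat.floor_le hPκ]
    have hhalf := ih (fun _ => h.skewBound_half hϑ hκ_pos hκ hconn hP) hstart
      (by rw [div_right_comm]; linarith) (by ring)
    rwa [div_div, ← pow_succ', add_assoc s 1 m, add_comm 1 m] at hhalf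

end PulseConditions

theorem stmt13_general {ϑ u d Λ κ : ℝ} (hϑ : 1 < ϑ) (hu : 0 ≤ u) (hΛ : d < Λ)
    (hκ : κ = 2 * (u + (1 - 1 / ϑ) * (Λ - d)))
    {V : Type*} {G : SimpleGraph V} (hconn : G.Connected) {t C : V → ℕ → ℝ}
    (h : PulseConditions G ϑ u d Λ κ t C) {s s' : ℕ} (hss' : s ≤ s') {lo : ℕ} {Ψs : ℝ}
    (hΨ : ∀ ℓ : ℕ, lo ≤ ℓ → ∀ v w : V,
      t v ℓ - t w ℓ - 4 * (s : ℝ) * κ * (G.dist v w : ℝ) ≤ Ψs) :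
    (∀ ℓ : ℕ, lo ≤ ℓ → (ℓ : ℝ) < (lo : ℝ) + 2 * Ψs / κ →
      ∀ v w : V, G.Adj v w → |t v ℓ - t w ℓ| ≤ 4 * (s : ℝ) * κ + Ψs) ∧
    (∀ ℓ : ℕ, (lo : ℝ) + 2 * Ψs / κ ≤ (ℓ : ℝ) →
      ∀ v w : V, G.Adj v w → |t v ℓ - t w ℓ| ≤ 4 * (s' : ℝ) * κ + Ψs / 2 ^ (s' - s)) := by
  have hΨ_bound : ∀ ℓ, lo ≤ ℓ → SkewBound G (4 * s * κ) (t · ℓ) Ψs := hΨ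
  refine ⟨fun ℓ hℓ _ v w hvw => (hΨ_bound ℓ hℓ).abs_sub_le_of_adj hvw, fun ℓ hℓ v w hvw => ?_⟩
  have hbound : SkewBound G (4 * (s + (s' - s) : ℕ) * κ) (t · ℓ) (Ψs / 2 ^ (s' - s)) :=
    h.skewBound_div_two_pow (by linarith) (kappa_pos hϑ hu hΛ hκ) hκ hconn hΨ_bound (s' - s) hℓ
  rw [Nat.add_sub_cancel' hss'] at hbound
  exact hbound.abs_sub_le_of_adj hvw

/-- The `tmax`/`tmin` over neighbours in the SC/FC/JC conditions are expressed
pointwise over the (nonempty) neighbourhood, which is equivalent. -/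
theorem stmt13
    (ϑ u d Λ κ : ℝ)
    (hϑ : 1 < ϑ) (hu : 0 ≤ u) (hd : u ≤ d) (hΛ : d < Λ)
    (hκ : κ = 2 * (u + (1 - 1/ϑ) * (Λ - d)))
    {V : Type*} [Fintype V] [Nonempty V]
    (G : SimpleGraph V) [DecidableRel G.Adj]
    (hconn : G.Connected) (hdeg : ∀ v : V, 2 ≤ G.degree v)
    (D : ℕ) (hD : 1 ≤ D) (hdiam : ∀ v w : V, G.dist v w ≤ D)
    (t : V → ℕ → ℝ) (C : V → ℕ → ℝ)
    (hDRIFT : ∀ (v : V) (ℓ : ℕ),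
      d - u + (Λ - d - C v (ℓ+1)) / ϑ ≤ t v (ℓ+1) - t v ℓ ∧
      t v (ℓ+1) - t v ℓ ≤ Λ - C v (ℓ+1))
    (hSC : ∀ (s : ℕ) (v : V) (ℓ : ℕ),
      (∀ w : V, G.Adj v w → C v (ℓ+1) / ϑ ≤ t v ℓ - t w ℓ + 4*(s:ℝ)*κ) ∨
      (∃ w : V, G.Adj v w ∧ C v (ℓ+1) / ϑ ≤ t v ℓ - t w ℓ - 4*(s:ℝ)*κ) ∨
      C v (ℓ+1) ≤ 0)
    (hFC : ∀ (s : ℕ), 1 ≤ s → ∀ (v : V) (ℓ : ℕ),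
      (∃ w : V, G.Adj v w ∧ t v ℓ - t w ℓ + (4*(s:ℝ)-2)*κ + κ ≤ C v (ℓ+1)) ∨
      (∀ w : V, G.Adj v w → t v ℓ - t w ℓ - (4*(s:ℝ)-2)*κ + κ ≤ C v (ℓ+1)) ∨
      κ ≤ C v (ℓ+1))
    (hJC : ∀ (v : V) (ℓ : ℕ),
      (κ < C v (ℓ+1)/ϑ ∧ ∀ w : V, G.Adj v w → C v (ℓ+1)/ϑ ≤ t v ℓ - t w ℓ - κ) ∨
      (C v (ℓ+1) < 0 ∧ ∀ w : V, G.Adj v w → t v ℓ - t w ℓ + κ ≤ C v (ℓ+1)) ∨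
      (0 ≤ C v (ℓ+1)/ϑ ∧ C v (ℓ+1)/ϑ ≤ κ))
    (s s' : ℕ) (hss' : s ≤ s') (lo : ℕ) (Ψs : ℝ)
    (hΨ : ∀ ℓ : ℕ, lo ≤ ℓ → ∀ v w : V,
      t v ℓ - t w ℓ - 4*(s:ℝ)*κ*(G.dist v w : ℝ) ≤ Ψs) :
    (∀ ℓ : ℕ, lo ≤ ℓ → (ℓ:ℝ) < (lo:ℝ) + 2*Ψs/κ →
      ∀ v w : V, G.Adj v w → |t v ℓ - t w ℓ| ≤ 4*(s:ℝ)*κ + Ψs) ∧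
    (∀ ℓ : ℕ, (lo:ℝ) + 2*Ψs/κ ≤ (ℓ:ℝ) →
      ∀ v w : V, G.Adj v w → |t v ℓ - t w ℓ| ≤ 4*(s':ℝ)*κ + Ψs/2^(s'-s)) :=
  stmt13_general hϑ hu hΛ hκ hconn ⟨hDRIFT, hSC, hFC, hJC⟩ hss' hΨ
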